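/- Let Γ be a strongly regular graph with parameters (v, k, λ, μ) on a finite vertex type, with 0 < μ, k = 2μ, and k < v − 1. Let r > s be the two real roots of ξ² + (μ − λ)ξ + (μ − k) = 0, let A be the adjacency matrix of Γ over ℝ, and let g be the dimension over ℝ of the kernel of A − s·I (the multiplicity of the eigenvalue s). Set M = v + 1 and N = g + 1. Then there exists a family φ : Fin M → EuclideanSpace ℝ (Fin N) of M unit vectors such that |⟨φ m, φ n⟩| = 1/(1 + 2r) for all m ≠ n, and Σ_m ⟨ψ, φ m⟩² = (M/N)‖ψ‖² for all ψ. -/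

import Mathlib

/-!
Write `A` for the adjacency matrix, `J` for an all-ones matrix of any shape, and set
`Q = [[1 + 2r, Jᵀ], [J, J - 2A + 2r]]`, that is, `1 + 2r` times the desired Gram matrix. Strong
regularity gives `(A - r)(A - s) = m J`, and together with `k = 2m` the parameter equation becomes
`v = 4m - 1 - 2(r + s)`. These identities yield `Q² = 2(r - s) Q`, so `P = Q / (2(r - s))` is an
orthogonal projection, of rank equal to its trace `(1 + 2r)(v + 1) / (2(r - s))`.

The multiplicity `g = (v r + k - r) / (r - s)` is computed in `srg_finrank_ker`, again as the trace
of a projection, and the rank of `P` turns out to be `g + 1`. By `exists_parseval_of_proj`, `P` is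
the Gram matrix of a Parseval frame of `ℝ^{g+1}`; scaling that frame by the square root of
`2(r - s) / (1 + 2r) = (v + 1) / (g + 1)` makes its vectors unit vectors. The off-diagonal entries
of `Q` are all `±1`, which gives equiangularity.
-/

open scoped RealInnerProductSpace

/-- A symmetric idempotent matrix of trace `n` is the Gram matrix of a Parseval frame of `ℝⁿ`: the
images of the standard basis vectors, read in an orthonormal basis of the range. -/
lemma exists_parseval_of_proj {ι : Type*} [Fintype ι] [DecidableEq ι] (P : Matrix ι ι ℝ)
    (hsymm : P.transpose = P) (hidem : P * P = P) (n : ℕ) (htr : P.trace = n) :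
    ∃ φ : ι → EuclideanSpace ℝ (Fin n), (∀ i j, ⟪φ i, φ j⟫ = P i j) ∧
      ∀ ψ : EuclideanSpace ℝ (Fin n), ∑ i, ⟪ψ, φ i⟫ ^ 2 = ‖ψ‖ ^ 2 := by
  set T : EuclideanSpace ℝ ι →ₗ[ℝ] EuclideanSpace ℝ ι := Matrix.toEuclideanLin P with hT
  have hTT : ∀ x, T (T x) = T x := fun x => by
    simp [hT, Matrix.toLpLin_apply, Matrix.mulVec_mulVec, hidem]
  have hproj : LinearMap.IsProj (LinearMap.range T) T :=
    ⟨fun x => ⟨x, rfl⟩, by rintro _ ⟨y, rfl⟩; exact hTT y⟩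
  have hdim : Module.finrank ℝ (LinearMap.range T) = n := by
    have h1 := hproj.trace
    have h2 : LinearMap.trace ℝ _ T = P.trace := by
      rw [hT, Matrix.toEuclideanLin_eq_toLin_orthonormal, Matrix.trace_toLin_eq]
    rw [h2, htr] at h1
    exact_mod_cast h1.symm
  have hin : ∀ x i, ⟪x, T (EuclideanSpace.single i 1)⟫ = T x i := fun x i => by
    have : ∀ j, P i j = P j i := fun j => congrFun (congrFun hsymm.symm i) j
    simp [hT, Matrix.toLpLin_apply, PiLp.inner_apply, Matrix.mulVec, dotProduct, this]
  let L := ((stdOrthonormalBasis ℝ (LinearMap.range T)).reindex (finCongr hdim)).repr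
  refine ⟨fun i => L ⟨T (EuclideanSpace.single i 1), _, rfl⟩, fun i j => ?_, fun ψ => ?_⟩
  · rw [L.inner_map_map, Submodule.coe_inner, hin, hTT]
    have : P j i = P i j := congrFun (congrFun hsymm i) j
    simp [hT, Matrix.toLpLin_apply, this]
  · obtain ⟨w, rfl⟩ := L.surjective ψ
    simp only [L.inner_map_map, Submodule.coe_inner, hin, L.norm_map, Submodule.coe_norm,
      hproj.map_id _ w.2]
    simp [EuclideanSpace.norm_sq_eq]

open Matrix in
/-- The multiplicity of the eigenvalue `s` when `(A - r)(A - s) = m J`, where `J` is the all-ones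
matrix and `k` is its eigenvalue under `A`: it is the trace of
`(A - r - ((k - r) / v) J) / (s - r)`, which projects onto the `s`-eigenspace. -/
lemma srg_finrank_ker {V : Type*} [Fintype V] [DecidableEq V] (A : Matrix V V ℝ)
    (k m r s : ℝ) (hv : (Fintype.card V : ℝ) ≠ 0)
    (htr : A.trace = 0) (hAJ : A * of 1 = k • of 1) (hJA : of 1 * A = k • of 1)
    (hAA : A * A = (r + s) • A - (r * s) • 1 + m • of 1)
    (hks : k ≠ s) (hrs : r ≠ s) (hkk : (k - r) * (k - s) = m * Fintype.card V) :
    (Module.finrank ℝ (LinearMap.ker (toLin' (A - s • (1 : Matrix V V ℝ)))) : ℝ) =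
      (Fintype.card V * r + k - r) / (r - s) := by
  have hsr : s - r ≠ 0 := sub_ne_zero.2 hrs.symm
  have hrs' : r - s ≠ 0 := sub_ne_zero.2 hrs
  set d : ℝ := (k - r) / Fintype.card V with hd
  have hdk : m = d * (k - s) := by rw [hd]; field_simp; linarith
  set E : Matrix V V ℝ := (s - r)⁻¹ • (A - r • 1 - d • of 1) with hE
  have hproj : LinearMap.IsProj
      (LinearMap.ker (toLin' (A - s • (1 : Matrix V V ℝ)))) (toLin' E) := by
    refine ⟨fun x => ?_, fun x hx => ?_⟩
    -- The coefficient `d` is chosen so that the multiples of `J` in the product cancel.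
    · have h0 : (A - s • 1) * E = 0 := by
        rw [hE, mul_smul_comm]
        have : (A - s • 1) * (A - r • 1 - d • of 1) = 0 := by
          simp only [sub_mul, mul_sub, smul_mul_assoc, mul_smul_comm, one_mul, mul_one, hAJ, hAA]
          rw [hdk]
          module
        rw [this, smul_zero]
      rw [LinearMap.mem_ker, ← toLin'_mul_apply, h0]; simp
    · rw [LinearMap.mem_ker, toLin'_apply, sub_mulVec, smul_mulVec, one_mulVec, sub_eq_zero] at hx
      -- Eigenvectors for `s ≠ k` have coordinate sum zero.
      have hJ : (of 1 : Matrix V V ℝ) *ᵥ x = 0 := by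
        have h1 : (of 1 * A) *ᵥ x = s • (of 1 : Matrix V V ℝ) *ᵥ x := by
          rw [← mulVec_mulVec, hx, mulVec_smul]
        rw [hJA, smul_mulVec, ← sub_eq_zero, ← sub_smul] at h1
        exact (smul_eq_zero.1 h1).resolve_left (sub_ne_zero.2 hks)
      rw [toLin'_apply, hE, smul_mulVec, sub_mulVec, sub_mulVec, hx, smul_mulVec, smul_mulVec, hJ,
        one_mulVec, smul_zero, sub_zero, ← sub_smul, inv_smul_smul₀ hsr]
  rw [← hproj.trace, trace_toLin'_eq, hE, trace_smul, trace_sub, trace_sub, trace_smul, trace_smul,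
    htr, trace_one]
  have : (of 1 : Matrix V V ℝ).trace = Fintype.card V := by simp [trace]
  rw [this, hd]
  simp only [smul_eq_mul]
  field_simp
  ring

open Matrix in
/-- Every strongly regular graph with parameters `(v, k, λ, μ)` satisfying `k = 2μ`
(with `0 < μ` and `k < v - 1`) is a descendant of a nontrivial real equiangular tight frame:
if `r > s` are the roots of `ξ² + (μ − λ)ξ + (μ − k) = 0` and `g` is the multiplicity of the
eigenvalue `s` of the adjacency matrix, then there is a family of `M = v + 1` unit vectors
in `ℝ^{g+1}` whose pairwise inner products all have absolute value `1/(1 + 2r)` and which is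
a tight frame with frame constant `M/N`, `N = g + 1`. -/
theorem etf_of_srg_descendant {V : Type*} [Fintype V] [DecidableEq V]
    (G : SimpleGraph V) [DecidableRel G.Adj] (v k l m : ℕ)
    (h : G.IsSRGWith v k l m) (hm : 0 < m) (hk2m : k = 2 * m) (hkv : k < v - 1)
    (r s : ℝ) (hrs : r > s)
    (hr : r ^ 2 + ((m : ℝ) - l) * r + ((m : ℝ) - k) = 0)
    (hs : s ^ 2 + ((m : ℝ) - l) * s + ((m : ℝ) - k) = 0)
    (g : ℕ)
    (hg : g = Module.finrank ℝ
      (LinearMap.ker (Matrix.toLin' (G.adjMatrix ℝ - s • (1 : Matrix V V ℝ))))) :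
    ∃ φ : Fin (v + 1) → EuclideanSpace ℝ (Fin (g + 1)),
      (∀ i, ‖φ i‖ = 1) ∧
      (∀ i j : Fin (v + 1), i ≠ j → |⟪φ i, φ j⟫| = 1 / (1 + 2 * r)) ∧
      (∀ ψ : EuclideanSpace ℝ (Fin (g + 1)),
        ∑ i : Fin (v + 1), ⟪ψ, φ i⟫ ^ 2 = (((v : ℝ) + 1) / ((g : ℝ) + 1)) * ‖ψ‖ ^ 2) := by
  have hmR : (0 : ℝ) < m := by exact_mod_cast hm
  have hkR : (k : ℝ) = 2 * m := by exact_mod_cast hk2m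
  have hsum : r + s = l - m := by
    have : (r - s) * (r + s - (l - m)) = 0 := by linear_combination hr - hs
    rcases mul_eq_zero.1 this with h | h <;> linarith
  have hprod : r * s = -m := by
    linear_combination r * hsum - hr - hkR
  have hr0 : 0 < r := by nlinarith
  have hs0 : s < 0 := by nlinarith
  have hcard : Fintype.card V = v := h.card
  have hvR : (v : ℝ) = 6 * m - 2 * l - 1 := by
    have h1 := h.param_eq G (by omega)
    -- The right side of `param_eq` is positive, so the truncated `k - l - 1` is a true difference.
    have h2 : 2 * (k - l - 1) = v - k - 1 := by
      apply Nat.eq_of_mul_eq_mul_right hm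
      rw [← h1, hk2m]; ring
    have h3 : v + 2 * l + 1 = 6 * m := by omega
    have h4 : (v : ℝ) + 2 * l + 1 = 6 * m := by exact_mod_cast h3
    linarith
  have hv0 : (0 : ℝ) < v := by exact_mod_cast (by omega : 0 < v)
  set A := G.adjMatrix ℝ with hA
  have hAJ : A * of 1 = (k : ℝ) • of 1 := by
    ext i j; simp [hA, h.regular i]
  have hJA : of 1 * A = (k : ℝ) • of 1 := by
    ext i j; simp [hA, h.regular j]
  have hAA : A * A = (r + s) • A - (r * s) • 1 + (m : ℝ) • of 1 := by
    have h1 := h.matrix_eq (α := ℝ)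
    rw [pow_two, ← SimpleGraph.compl_adjMatrix_eq_adjMatrix_compl] at h1
    have h2 := G.one_add_adjMatrix_add_compl_adjMatrix_eq_of_one (α := ℝ)
    rw [← h2, hA, h1, hsum, hprod, ← Nat.cast_smul_eq_nsmul ℝ, ← Nat.cast_smul_eq_nsmul ℝ,
      ← Nat.cast_smul_eq_nsmul ℝ, hkR]
    module
  have hgR : (g : ℝ) = (v * r + k - r) / (r - s) := by
    rw [hg, srg_finrank_ker A k m r s (by rw [hcard]; exact hv0.ne') (by simp [hA]) hAJ hJA hAA
      (by linarith) hrs.ne'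
      (by rw [hcard, hvR, hkR]; linear_combination (-2 * (m : ℝ)) * hsum + hprod), hcard]
  have hc : 0 < r - s := sub_pos.2 hrs
  have hg1 : (g : ℝ) + 1 = (1 + 2 * r) * (v + 1) / (2 * (r - s)) := by
    rw [hgR]; field_simp; linear_combination (-1 : ℝ) * hvR + 2 * hkR - 2 * hsum
  -- `Q` is `1 + 2r` times the Gram matrix of the frame.
  set Q : Matrix (Unit ⊕ V) (Unit ⊕ V) ℝ :=
    fromBlocks ((1 + 2 * r) • 1) (of 1) (of 1) (of 1 - (2 : ℝ) • A + (2 * r) • 1) with hQ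
  have hv' : (v : ℝ) = 4 * m - 1 - 2 * (r + s) := by linarith
  have hQt : Qᵀ = Q := by
    rw [hQ, fromBlocks_transpose]
    have hJt : (of 1 : Matrix V V ℝ)ᵀ = of 1 := rfl
    have hAt : Aᵀ = A := G.transpose_adjMatrix
    congr 1; simp [hAt, hJt]
  have hJJ : (of 1 : Matrix V V ℝ) * of 1 = (v : ℝ) • of 1 := by
    ext i j; simp [mul_apply, hcard]
  have hQQ : Q * Q = (2 * (r - s)) • Q := by
    rw [hQ, fromBlocks_multiply, fromBlocks_smul]
    congr 1
    · ext i j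
      simp [mul_apply, hcard]
      linear_combination hv' + 4 * hprod
    · have h1 : (of 1 : Matrix Unit V ℝ) * A = (k : ℝ) • of 1 := by
        ext i j; simpa [mul_apply] using congrFun (congrFun hJA j) j
      have h2 : (of 1 : Matrix Unit V ℝ) * (of 1 : Matrix V V ℝ) = (v : ℝ) • of 1 := by
        ext i j; simp [mul_apply, hcard]
      simp only [Matrix.smul_mul, Matrix.mul_smul, Matrix.mul_one, Matrix.one_mul,
        Matrix.mul_sub, Matrix.mul_add, h1, h2, hv', hkR]
      module
    · have h1 : A * (of 1 : Matrix V Unit ℝ) = (k : ℝ) • of 1 := by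
        ext i j; simpa [mul_apply] using congrFun (congrFun hAJ i) i
      have h2 : (of 1 : Matrix V V ℝ) * (of 1 : Matrix V Unit ℝ) = (v : ℝ) • of 1 := by
        ext i j; simp [mul_apply, hcard]
      simp only [Matrix.smul_mul, Matrix.mul_smul, Matrix.mul_one, Matrix.one_mul,
        Matrix.sub_mul, Matrix.add_mul, h1, h2, hv', hkR]
      module
    · have h1 : (of 1 : Matrix V Unit ℝ) * (of 1 : Matrix Unit V ℝ) = of 1 := by
        ext i j; simp [mul_apply]
      rw [h1]
      simp only [sub_mul, mul_sub, add_mul, mul_add, smul_mul_assoc, mul_smul_comm, one_mul,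
        mul_one, hAJ, hJA, hAA, hJJ, hv', hkR]
      module
  have hQd : ∀ i, Q i i = 1 + 2 * r := by
    rintro (i | i) <;> simp [hQ, hA]
  have hQtr : Q.trace = (1 + 2 * r) * (v + 1) := by
    simp only [trace, diag_apply, hQd, Finset.sum_const, Finset.card_univ, Fintype.card_sum,
      Fintype.card_unit, hcard, nsmul_eq_mul]
    push_cast
    ring
  have hQo : ∀ i j, i ≠ j → |Q i j| = 1 := by
    rintro (i | i) (j | j) hij
    · exact absurd rfl hij
    · simp [hQ]
    · simp [hQ]
    · have hij' : i ≠ j := fun h => hij (h ▸ rfl)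
      by_cases hadj : G.Adj i j
      · simp [hQ, hA, hij', hadj]; norm_num
      · simp [hQ, hA, hij', hadj]
  have ha : 0 < 1 + 2 * r := by linarith
  obtain ⟨φ, hφ, hφψ⟩ := exists_parseval_of_proj ((2 * (r - s))⁻¹ • Q)
    (by rw [transpose_smul, hQt])
    (by rw [smul_mul_smul_comm, hQQ, smul_smul]; congr 1; field_simp) (g + 1)
    (by rw [trace_smul, hQtr]; push_cast; rw [hg1, smul_eq_mul]; field_simp)
  have e : Fin (v + 1) ≃ Unit ⊕ V :=
    (Fintype.equivFinOfCardEq (by simp [hcard, add_comm])).symm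
  set t : ℝ := √(2 * (r - s) / (1 + 2 * r)) with ht
  have htt : t * t = 2 * (r - s) / (1 + 2 * r) := Real.mul_self_sqrt (by positivity)
  have hin : ∀ i j, ⟪t • φ (e i), t • φ (e j)⟫ = Q (e i) (e j) / (1 + 2 * r) := fun i j => by
    rw [real_inner_smul_left, real_inner_smul_right, hφ, ← mul_assoc, htt, Matrix.smul_apply, smul_eq_mul]
    field_simp
  refine ⟨fun i => t • φ (e i), fun i => ?_, fun i j hij => ?_, fun ψ => ?_⟩
  · have := hin i i
    rw [hQd, div_self ha.ne', real_inner_self_eq_norm_sq] at this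
    exact (pow_eq_one_iff_of_nonneg (norm_nonneg _) two_ne_zero).1 this
  · rw [hin, abs_div, hQo _ _ (e.injective.ne hij), abs_of_pos ha]
  · simp only [real_inner_smul_right, mul_pow]
    rw [← Finset.mul_sum, e.sum_comp (fun i => ⟪ψ, φ i⟫ ^ 2), hφψ, pow_two t, htt, hg1]
    congr 1
    field_simp
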